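/- If u ∈ 𝒜₃ and v ∈ 𝒜₂, then there is a constant c̃_* ≥ 1, depending only on the C³-norm ‖u‖₃ and the C²-norm ‖v‖₂ (and independent of α₀, H₁, H₂), such that ‖∂^α(uv)‖₀ ≤ c̃_* H₁^{α₁−2} H₂^{α₂} [(|α|−3)!]^s for every α = (α₁,α₂) ≤ α₀ with |α| ≥ 3 (i.e. c̃_*^{−1} uv ∈ 𝒜₂). -/

import Mathlib

open Set

noncomputable section

/-- The closed strip `R̄ = ℝ × [p₀, 0]`. -/
def Strip (p₀ : ℝ) : Set (ℝ × ℝ) := {z : ℝ × ℝ | p₀ ≤ z.2 ∧ z.2 ≤ 0}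

/-- The mixed partial derivative `∂_q^a ∂_p^b f` of `f : ℝ² → ℝ` within the set `S`,
realized as the iterated Fréchet derivative within `S` applied to the corresponding
coordinate directions. -/
def mpw (S : Set (ℝ × ℝ)) (a b : ℕ) (f : ℝ × ℝ → ℝ) (z : ℝ × ℝ) : ℝ :=
  iteratedFDerivWithin ℝ (a + b) f S z
    (fun i => if (i : ℕ) < a then ((1 : ℝ), (0 : ℝ)) else ((0 : ℝ), (1 : ℝ)))

/-- `∂_q^a ∂_p^b f` within the strip `R̄`. -/
def pd (p₀ : ℝ) (a b : ℕ) (f : ℝ × ℝ → ℝ) : ℝ × ℝ → ℝ := mpw (Strip p₀) a b f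

/-- Euclidean distance on `ℝ²`. -/
def edist2 (z z' : ℝ × ℝ) : ℝ := Real.sqrt ((z.1 - z'.1) ^ 2 + (z.2 - z'.2) ^ 2)

/-- `sup_{R̄} |f|`. -/
def supS (p₀ : ℝ) (f : ℝ × ℝ → ℝ) : ℝ := sSup ((fun z => |f z|) '' Strip p₀)

/-- The Hölder seminorm of exponent `μ` of `f` over the strip `R̄`. -/
def hsemi (p₀ μ : ℝ) (f : ℝ × ℝ → ℝ) : ℝ :=
  sSup {y | ∃ z ∈ Strip p₀, ∃ z' ∈ Strip p₀, z ≠ z' ∧ y = |f z - f z'| / (edist2 z z') ^ μ}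

/-- The `C^k` sup-norm `‖f‖_k = Σ_{|α| ≤ k} sup_{R̄} |∂^α f|`. -/
def cknorm (p₀ : ℝ) (k : ℕ) (f : ℝ × ℝ → ℝ) : ℝ :=
  ∑ a ∈ Finset.range (k + 1), ∑ b ∈ Finset.range (k + 1 - a), supS p₀ (pd p₀ a b f)

/-- The Hölder norm `‖f‖_{k,μ} = ‖f‖_k + max_{|α| = k} [∂^α f]_μ`. -/
def hnorm (p₀ μ : ℝ) (k : ℕ) (f : ℝ × ℝ → ℝ) : ℝ :=
  cknorm p₀ k f + sSup {y | ∃ a b : ℕ, a + b = k ∧ y = hsemi p₀ μ (pd p₀ a b f)}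

/-- Boundedness of `f` on the strip (finiteness of `sup_{R̄} |f|`). -/
def bddS (p₀ : ℝ) (f : ℝ × ℝ → ℝ) : Prop := BddAbove ((fun z => |f z|) '' Strip p₀)

/-- Finiteness of the Hölder seminorm of `f` on the strip. -/
def bddH (p₀ μ : ℝ) (f : ℝ × ℝ → ℝ) : Prop :=
  BddAbove {y | ∃ z ∈ Strip p₀, ∃ z' ∈ Strip p₀, z ≠ z' ∧ y = |f z - f z'| / (edist2 z z') ^ μ}

/-- Finiteness of the `C^{k,μ}(R̄)` norm. -/
def finCk (p₀ μ : ℝ) (k : ℕ) (f : ℝ × ℝ → ℝ) : Prop :=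
  (∀ a b : ℕ, a + b ≤ k → bddS p₀ (pd p₀ a b f)) ∧
  (∀ a b : ℕ, a + b = k → bddH p₀ μ (pd p₀ a b f))

/-- Membership in `C^{k,μ}(R̄)`: `k` times continuously differentiable on the strip with
bounded derivatives, the top-order ones Hölder continuous of exponent `μ`. -/
def MemCk (p₀ μ : ℝ) (k : ℕ) (f : ℝ × ℝ → ℝ) : Prop :=
  ContDiffOn ℝ k f (Strip p₀) ∧ finCk p₀ μ k f

/-- The class `𝒜_j`: functions `f ∈ C^{|α₀|,μ}(R̄)` such that
`‖∂^α f‖₀ ≤ H₁^{α₁−j} H₂^{α₂} [(|α|−j−1)!]^s` for every `α ≤ α₀` with `|α| ≥ j+1`. -/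
def memA (p₀ μ s H₁ H₂ : ℝ) (α₀ : ℕ × ℕ) (j : ℕ) (f : ℝ × ℝ → ℝ) : Prop :=
  MemCk p₀ μ (α₀.1 + α₀.2) f ∧
  ∀ a b : ℕ, a ≤ α₀.1 → b ≤ α₀.2 → j + 1 ≤ a + b →
    ∀ z ∈ Strip p₀, |pd p₀ a b f z| ≤
      H₁ ^ ((a : ℤ) - (j : ℤ)) * H₂ ^ b * (Nat.factorial (a + b - (j + 1)) : ℝ) ^ s

open scoped Nat

/-! Let `u ∈ 𝒜_i` and `v ∈ 𝒜_j` with `i ≥ j ≥ 1`. By the Leibniz rule, `∂^α(uv)` is a binomial sum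
of the products `∂^β u · ∂^{α-β} v`. Low order derivatives are controlled by the `C^i`-norm of `u`
and the `C^j`-norm of `v`, the others by the growth conditions, and in all cases the powers of `H₁`
and `H₂` multiply up to at most `H₁^{α₁-j} H₂^{α₂}`. What is left depends on `β` only through `|β|`,
so that Vandermonde's identity reduces the double binomial sum to
`∑ k, C(n,k) [(k-r)!]^s [(n-k-r)!]^s` with `n = |α|`, `r = j + 1`. As `(k-r)!` is comparable to
`k!/(k+1)^r`, this is at most `[(n-r)!]^s` times a constant multiple of `∑ (k+1)^{-r}`, which
converges because `r ≥ 2`. -/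

section Binomial

open Finset

theorem sum_antidiagonal_choose_succ_mul_eq_sum_add {R : Type*} [CommSemiring R]
    (f : ℕ → ℕ → R) (n : ℕ) :
    ∑ k ∈ antidiagonal (n + 1), ((n + 1).choose k.1 : R) * f k.1 k.2 =
      ∑ k ∈ antidiagonal n, (n.choose k.1 : R) * (f k.1 (k.2 + 1) + f (k.1 + 1) k.2) := by
  rw [sum_antidiagonal_choose_succ_mul, ← sum_add_distrib]
  refine sum_congr rfl fun k hk => ?_
  rw [← Nat.choose_symm_of_eq_add (mem_antidiagonal.1 hk).symm, mul_add]

theorem sum_choose_mul_sum_choose_mul {R : Type*} [CommSemiring R] (f : ℕ → ℕ → R) (a b : ℕ) :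
    ∑ k ∈ antidiagonal a, (a.choose k.1 : R) *
        ∑ l ∈ antidiagonal b, (b.choose l.1 : R) * f (k.1 + l.1) (k.2 + l.2) =
      ∑ k ∈ antidiagonal (a + b), ((a + b).choose k.1 : R) * f k.1 k.2 := by
  induction a generalizing f with
  | zero => simp
  | succ a ih =>
    rw [sum_antidiagonal_choose_succ_mul_eq_sum_add
        (fun m n => ∑ l ∈ antidiagonal b, (b.choose l.1 : R) * f (m + l.1) (n + l.2)),
      Nat.add_right_comm a 1 b, sum_antidiagonal_choose_succ_mul_eq_sum_add,
      ← ih (fun m n => f m (n + 1) + f (m + 1) n)]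
    simp only [← sum_add_distrib, ← mul_add, Nat.add_right_comm _ 1]

theorem succ_pow_mul_factorial_sub_le (r k : ℕ) :
    (k + 1) ^ r * (k - r)! ≤ (r + 1) ^ r * k ! := by
  rcases le_total r k with hrk | hkr
  · have h_base : k + 1 ≤ (r + 1) * (k + 1 - r) := by
      obtain ⟨d, rfl⟩ := Nat.exists_eq_add_of_le hrk
      rw [show r + d + 1 - r = d + 1 by omega]
      nlinarith
    calc (k + 1) ^ r * (k - r)! ≤ ((r + 1) * (k + 1 - r)) ^ r * (k - r)! := by gcongr
      _ = (r + 1) ^ r * ((k - r)! * (k + 1 - r) ^ r) := by rw [mul_pow]; ring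
      _ ≤ (r + 1) ^ r * ((k - r)! * k.descFactorial r) := by
        gcongr
        exact Nat.pow_sub_le_descFactorial k r
      _ = (r + 1) ^ r * k ! := by rw [Nat.factorial_mul_descFactorial hrk]
  · rw [Nat.sub_eq_zero_of_le hkr, Nat.factorial_zero]
    exact Nat.mul_le_mul (by gcongr) (Nat.factorial_pos k)

theorem factorial_le_pow_mul_factorial_sub {r n : ℕ} (hrn : r ≤ n) : n ! ≤ n ^ r * (n - r)! := by
  rw [← Nat.factorial_mul_descFactorial hrn, mul_comm]
  gcongr
  exact Nat.descFactorial_le_pow n r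

theorem add_choose_mul_factorial_sub_mul_le {r k m : ℕ} (hr : r ≤ k + m) :
    ((k + m).choose k * ((k - r)! * (m - r)!)) * ((k + 1) ^ r * (m + 1) ^ r) ≤
      2 ^ (r - 1) * (r + 1) ^ (2 * r) * (k + m - r)! * ((k + 1) ^ r + (m + 1) ^ r) := by
  have h_sum : (k + m) ^ r ≤ 2 ^ (r - 1) * ((k + 1) ^ r + (m + 1) ^ r) :=
    (Nat.pow_le_pow_left (by omega) r).trans (add_pow_le zero_le zero_le r)
  calc ((k + m).choose k * ((k - r)! * (m - r)!)) * ((k + 1) ^ r * (m + 1) ^ r)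
      = (k + m).choose k * (((k + 1) ^ r * (k - r)!) * ((m + 1) ^ r * (m - r)!)) := by ring
    _ ≤ (k + m).choose k * (((r + 1) ^ r * k !) * ((r + 1) ^ r * m !)) := by
      gcongr (k + m).choose k * (?_ * ?_) <;> exact succ_pow_mul_factorial_sub_le _ _
    _ = (r + 1) ^ (2 * r) * (k + m)! := by
      rw [← Nat.add_choose_mul_factorial_mul_factorial k m, Nat.choose_symm_add]
      ring
    _ ≤ (r + 1) ^ (2 * r) *
        (2 ^ (r - 1) * ((k + 1) ^ r + (m + 1) ^ r) * (k + m - r)!) := by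
      gcongr
      exact (factorial_le_pow_mul_factorial_sub hr).trans (by gcongr)
    _ = _ := by ring

theorem add_choose_mul_factorial_sub_le_inv {r k m : ℕ} (hr : r ≤ k + m) :
    ((k + m).choose k : ℝ) * ((k - r)! * (m - r)!) ≤
      2 ^ (r - 1) * (r + 1) ^ (2 * r) * (k + m - r)! *
        (((k + 1 : ℝ) ^ r)⁻¹ + ((m + 1 : ℝ) ^ r)⁻¹) := by
  rw [inv_add_inv (by positivity) (by positivity), ← mul_div_assoc, le_div_iff₀ (by positivity)]
  exact_mod_cast add_choose_mul_factorial_sub_mul_le hr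

theorem sum_range_inv_succ_pow_le_two {r : ℕ} (hr : 2 ≤ r) (n : ℕ) :
    ∑ k ∈ range n, ((k + 1 : ℝ) ^ r)⁻¹ ≤ 2 :=
  calc ∑ k ∈ range n, ((k + 1 : ℝ) ^ r)⁻¹ ≤ ∑ k ∈ range n, (((k + 1 : ℕ) : ℝ) ^ 2)⁻¹ := by
        push_cast
        gcongr
        simp
    _ = ∑ k ∈ Ioo 0 (n + 1), ((k : ℝ) ^ 2)⁻¹ := by
        rw [range_eq_Ico, sum_Ico_add' (fun k : ℕ => ((k : ℝ) ^ 2)⁻¹)]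
        rfl
    _ ≤ 2 := by simpa using sum_Ioo_inv_sq_le (α := ℝ) 0 (n + 1)

theorem sum_choose_mul_factorial_sub_le {r n : ℕ} (hr : 2 ≤ r) (hrn : r ≤ n) :
    ∑ k ∈ antidiagonal n, (n.choose k.1 : ℝ) * ((k.1 - r)! * (k.2 - r)!) ≤
      2 ^ (r + 1) * (r + 1) ^ (2 * r) * (n - r)! := by
  have h_fst : ∑ k ∈ antidiagonal n, ((k.1 + 1 : ℝ) ^ r)⁻¹ ≤ 2 := by
    rw [Nat.sum_antidiagonal_eq_sum_range_succ (fun k _ => ((k + 1 : ℝ) ^ r)⁻¹)]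
    exact sum_range_inv_succ_pow_le_two hr _
  have h_snd : ∑ k ∈ antidiagonal n, ((k.2 + 1 : ℝ) ^ r)⁻¹ ≤ 2 := by
    rwa [← Nat.sum_antidiagonal_swap]
  calc ∑ k ∈ antidiagonal n, (n.choose k.1 : ℝ) * ((k.1 - r)! * (k.2 - r)!)
      ≤ ∑ k ∈ antidiagonal n, 2 ^ (r - 1) * (r + 1) ^ (2 * r) * (n - r)! *
          (((k.1 + 1 : ℝ) ^ r)⁻¹ + ((k.2 + 1 : ℝ) ^ r)⁻¹) := by
        refine sum_le_sum fun k hk => ?_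
        obtain rfl := mem_antidiagonal.1 hk
        exact add_choose_mul_factorial_sub_le_inv hrn
    _ ≤ 2 ^ (r - 1) * (r + 1) ^ (2 * r) * (n - r)! * (2 + 2) := by
        rw [← mul_sum, sum_add_distrib]
        gcongr
    _ = 2 ^ (r + 1) * (r + 1) ^ (2 * r) * (n - r)! := by
        rw [show r + 1 = r - 1 + 2 by omega, pow_add]
        ring

theorem rpow_le_mul_rpow_sub_one {x y s : ℝ} (hx : 0 < x) (hxy : x ≤ y) (hs : 1 ≤ s) :
    x ^ s ≤ x * y ^ (s - 1) :=
  calc x ^ s = x * x ^ (s - 1) := by rw [Real.rpow_sub_one hx.ne', mul_div_cancel₀ _ hx.ne']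
    _ ≤ x * y ^ (s - 1) := by gcongr

theorem factorial_sub_rpow_mul_le {r k m : ℕ} {s : ℝ} (hs : 1 ≤ s) :
    ((k - r)! : ℝ) ^ s * ((m - r)! : ℝ) ^ s ≤
      (k - r)! * (m - r)! * ((k + m - r)! : ℝ) ^ (s - 1) := by
  have h_nat : (k - r)! * (m - r)! ≤ (k + m - r)! :=
    (Nat.le_of_dvd (Nat.factorial_pos _) (Nat.factorial_mul_factorial_dvd_factorial_add _ _)).trans
      (Nat.factorial_le (by omega))
  rw [← Real.mul_rpow (by positivity) (by positivity)]
  exact rpow_le_mul_rpow_sub_one (by positivity) (mod_cast h_nat) hs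

theorem sum_choose_mul_factorial_sub_rpow_le {r n : ℕ} {s : ℝ} (hs : 1 ≤ s) (hr : 2 ≤ r)
    (hrn : r ≤ n) :
    ∑ k ∈ antidiagonal n, (n.choose k.1 : ℝ) * (((k.1 - r)! : ℝ) ^ s * ((k.2 - r)! : ℝ) ^ s) ≤
      2 ^ (r + 1) * (r + 1) ^ (2 * r) * ((n - r)! : ℝ) ^ s :=
  calc ∑ k ∈ antidiagonal n, (n.choose k.1 : ℝ) * (((k.1 - r)! : ℝ) ^ s * ((k.2 - r)! : ℝ) ^ s)
      ≤ ∑ k ∈ antidiagonal n,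
          (n.choose k.1 : ℝ) * ((k.1 - r)! * (k.2 - r)!) * ((n - r)! : ℝ) ^ (s - 1) := by
        refine sum_le_sum fun k hk => ?_
        obtain rfl := mem_antidiagonal.1 hk
        rw [mul_assoc]
        exact mul_le_mul_of_nonneg_left (factorial_sub_rpow_mul_le hs) (Nat.cast_nonneg _)
    _ ≤ 2 ^ (r + 1) * (r + 1) ^ (2 * r) * (n - r)! * ((n - r)! : ℝ) ^ (s - 1) := by
        rw [← sum_mul]
        gcongr
        exact sum_choose_mul_factorial_sub_le hr hrn
    _ = 2 ^ (r + 1) * (r + 1) ^ (2 * r) * ((n - r)! : ℝ) ^ s := by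
        rw [mul_assoc, Real.rpow_sub_one (by positivity), mul_div_cancel₀ _ (by positivity)]

end Binomial

section DerivChain

open Finset

variable {𝕜 E 𝔸 : Type*} [NontriviallyNormedField 𝕜] [NormedAddCommGroup E] [NormedSpace 𝕜 E]
  [NormedCommRing 𝔸] [NormedAlgebra 𝕜 𝔸] {S : Set E} {e : E} {n : ℕ} {w w' : ℕ → E → 𝔸}

variable (𝕜) in
/-- `w 0, …, w n` are the successive derivatives of `w 0` in the direction `e` within `S`. The
Leibniz rule is proved for such chains, so that it applies to each variable of a mixed partial
derivative separately. -/
def IsDerivChainWithin (S : Set E) (e : E) (n : ℕ) (w : ℕ → E → 𝔸) : Prop :=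
  ∀ k < n, DifferentiableOn 𝕜 (w k) S ∧ ∀ z ∈ S, fderivWithin 𝕜 (w k) S z e = w (k + 1) z

namespace IsDerivChainWithin

theorem eqOn (hw : IsDerivChainWithin 𝕜 S e n w) (hw' : IsDerivChainWithin 𝕜 S e n w')
    (h₀ : EqOn (w 0) (w' 0) S) : EqOn (w n) (w' n) S := by
  suffices ∀ k ≤ n, EqOn (w k) (w' k) S from this n le_rfl
  intro k
  induction k with
  | zero => exact fun _ => h₀
  | succ k ih =>
    intro hk z hz
    have h_eq := ih (by omega)
    rw [← (hw k hk).2 z hz, ← (hw' k hk).2 z hz, fderivWithin_congr h_eq (h_eq hz)]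

theorem const_mul (hS : UniqueDiffOn 𝕜 S) (hw : IsDerivChainWithin 𝕜 S e n w) (c : 𝔸) :
    IsDerivChainWithin 𝕜 S e n fun k z => c * w k z := by
  refine fun k hk => ⟨(hw k hk).1.const_mul c, fun z hz => ?_⟩
  rw [fderivWithin_const_mul (hS z hz) ((hw k hk).1 z hz), _root_.smul_apply,
    (hw k hk).2 z hz, smul_eq_mul]

theorem sum {ι : Type*} {T : Finset ι} {w : ι → ℕ → E → 𝔸} (hS : UniqueDiffOn 𝕜 S)
    (hw : ∀ t ∈ T, IsDerivChainWithin 𝕜 S e n (w t)) :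
    IsDerivChainWithin 𝕜 S e n fun k z => ∑ t ∈ T, w t k z := by
  refine fun k hk => ⟨DifferentiableOn.fun_sum fun t ht => (hw t ht k hk).1, fun z hz => ?_⟩
  rw [fderivWithin_fun_sum (hS z hz) fun t ht => (hw t ht k hk).1 z hz,
    _root_.sum_apply]
  exact sum_congr rfl fun t ht => (hw t ht k hk).2 z hz

theorem mul (hS : UniqueDiffOn 𝕜 S) (hw : IsDerivChainWithin 𝕜 S e n w)
    (hw' : IsDerivChainWithin 𝕜 S e n w') :
    IsDerivChainWithin 𝕜 S e n fun m z =>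
      ∑ k ∈ antidiagonal m, (m.choose k.1 : 𝔸) * (w k.1 z * w' k.2 z) := by
  intro m hm
  have h_lt : ∀ k ∈ antidiagonal m, k.1 < n ∧ k.2 < n := fun k hk => by
    have := mem_antidiagonal.1 hk
    omega
  have h_diff : ∀ k ∈ antidiagonal m,
      DifferentiableOn 𝕜 (fun z => (m.choose k.1 : 𝔸) * (w k.1 z * w' k.2 z)) S := fun k hk =>
    ((hw _ (h_lt k hk).1).1.mul (hw' _ (h_lt k hk).2).1).const_mul _
  refine ⟨DifferentiableOn.fun_sum h_diff, fun z hz => ?_⟩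
  rw [fderivWithin_fun_sum (hS z hz) fun k hk => h_diff k hk z hz,
    _root_.sum_apply]
  refine .trans ?_ (sum_antidiagonal_choose_succ_mul_eq_sum_add (fun i j => w i z * w' j z) m).symm
  refine sum_congr rfl fun k hk => ?_
  obtain ⟨hd, hd_eq⟩ := hw _ (h_lt k hk).1
  obtain ⟨hd', hd'_eq⟩ := hw' _ (h_lt k hk).2
  rw [fderivWithin_const_mul (hS z hz) ((hd z hz).fun_mul (hd' z hz)),
    fderivWithin_fun_mul (hS z hz) (hd z hz) (hd' z hz), ← hd_eq z hz, ← hd'_eq z hz]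
  simp [mul_comm, mul_add]

end IsDerivChainWithin

end DerivChain

section MixedPartial

open Finset

variable {S : Set (ℝ × ℝ)} {f u v : ℝ × ℝ → ℝ} {a b N : ℕ}

theorem mpw_zero_zero (S : Set (ℝ × ℝ)) (f : ℝ × ℝ → ℝ) : mpw S 0 0 f = f := by
  ext z
  simp [mpw]

theorem differentiableOn_mpw (hS : UniqueDiffOn ℝ S) (hf : ContDiffOn ℝ N f S) (hab : a + b < N) :
    DifferentiableOn ℝ (mpw S a b f) S :=
  (hf.differentiableOn_iteratedFDerivWithin (mod_cast hab) hS).continuousMultilinear_apply_const _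

theorem fderivWithin_mpw_fst (hS : UniqueDiffOn ℝ S) (hf : ContDiffOn ℝ N f S) (hab : a + b < N)
    {z : ℝ × ℝ} (hz : z ∈ S) : fderivWithin ℝ (mpw S a b f) S z (1, 0) = mpw S (a + 1) b f z := by
  unfold mpw
  rw [Nat.add_right_comm a 1 b, iteratedFDerivWithin_succ_apply_left,
    fderivWithin_continuousMultilinear_apply_const_apply (hS z hz)
      (hf.differentiableOn_iteratedFDerivWithin (mod_cast hab) hS z hz)]
  congr 1
  ext i <;> simp [Fin.tail]

theorem fderivWithin_mpw_snd (hS : UniqueDiffOn ℝ S) (hf : ContDiffOn ℝ N f S) (hb : b < N)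
    {z : ℝ × ℝ} (hz : z ∈ S) : fderivWithin ℝ (mpw S 0 b f) S z (0, 1) = mpw S 0 (b + 1) f z := by
  unfold mpw
  rw [← Nat.add_assoc 0 b 1, iteratedFDerivWithin_succ_apply_left,
    fderivWithin_continuousMultilinear_apply_const_apply (hS z hz)
      (hf.differentiableOn_iteratedFDerivWithin (mod_cast (by omega)) hS z hz)]
  rfl

theorem isDerivChainWithin_mpw_fst (hS : UniqueDiffOn ℝ S) (hf : ContDiffOn ℝ N f S)
    (hab : a + b ≤ N) : IsDerivChainWithin ℝ S (1, 0) a fun k => mpw S k b f := fun _ _ =>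
  ⟨differentiableOn_mpw hS hf (by omega), fun _ => fderivWithin_mpw_fst hS hf (by omega)⟩

theorem isDerivChainWithin_mpw_snd (hS : UniqueDiffOn ℝ S) (hf : ContDiffOn ℝ N f S)
    (hb : b ≤ N) : IsDerivChainWithin ℝ S (0, 1) b fun k => mpw S 0 k f := fun _ _ =>
  ⟨differentiableOn_mpw hS hf (by omega), fun _ => fderivWithin_mpw_snd hS hf (by omega)⟩

theorem mpw_zero_left_mul (hS : UniqueDiffOn ℝ S) (hu : ContDiffOn ℝ N u S)
    (hv : ContDiffOn ℝ N v S) (hb : b ≤ N) :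
    EqOn (mpw S 0 b fun y => u y * v y)
      (fun z => ∑ l ∈ antidiagonal b, (b.choose l.1 : ℝ) * (mpw S 0 l.1 u z * mpw S 0 l.2 v z))
      S :=
  (isDerivChainWithin_mpw_snd hS (hu.mul hv) hb).eqOn
    ((isDerivChainWithin_mpw_snd hS hu hb).mul hS (isDerivChainWithin_mpw_snd hS hv hb))
    fun z _ => by simp [mpw_zero_zero]

theorem mpw_mul (hS : UniqueDiffOn ℝ S) (hu : ContDiffOn ℝ N u S) (hv : ContDiffOn ℝ N v S)
    (hab : a + b ≤ N) :
    EqOn (mpw S a b fun y => u y * v y)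
      (fun z => ∑ l ∈ antidiagonal b, (b.choose l.1 : ℝ) * ∑ k ∈ antidiagonal a,
        (a.choose k.1 : ℝ) * (mpw S k.1 l.1 u z * mpw S k.2 l.2 v z)) S := by
  refine (isDerivChainWithin_mpw_fst hS (hu.mul hv) hab).eqOn
    (.sum hS fun l hl => .const_mul hS (.mul hS (isDerivChainWithin_mpw_fst hS hu ?_)
      (isDerivChainWithin_mpw_fst hS hv ?_)) _) fun z hz => ?_
  · have := mem_antidiagonal.1 hl
    omega
  · have := mem_antidiagonal.1 hl
    omega
  · simpa using mpw_zero_left_mul hS hu hv (by omega : b ≤ N) hz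

theorem abs_mpw_mul_le_sum_choose_mul (hS : UniqueDiffOn ℝ S) (hu : ContDiffOn ℝ N u S)
    (hv : ContDiffOn ℝ N v S) (hab : a + b ≤ N) {z : ℝ × ℝ} (hz : z ∈ S) {g : ℕ → ℕ → ℝ}
    (hg : ∀ k ∈ antidiagonal a, ∀ l ∈ antidiagonal b,
      |mpw S k.1 l.1 u z| * |mpw S k.2 l.2 v z| ≤ g (l.1 + k.1) (l.2 + k.2)) :
    |mpw S a b (fun y => u y * v y) z| ≤
      ∑ k ∈ antidiagonal (a + b), ((a + b).choose k.1 : ℝ) * g k.1 k.2 := by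
  rw [mpw_mul hS hu hv hab hz, add_comm a b, ← sum_choose_mul_sum_choose_mul]
  refine (abs_sum_le_sum_abs _ _).trans (sum_le_sum fun l hl => ?_)
  rw [abs_mul, Nat.abs_cast]
  gcongr
  refine (abs_sum_le_sum_abs _ _).trans (sum_le_sum fun k hk => ?_)
  rw [abs_mul, Nat.abs_cast, abs_mul]
  gcongr
  exact hg k hk l hl

end MixedPartial

section Growth

variable {S : Set (ℝ × ℝ)} {u v : ℝ × ℝ → ℝ} {s H₁ H₂ M₁ M₂ : ℝ} {a b a' b' i j : ℕ}

/-- The power `H₁^{α₁-j} H₂^{α₂}` in the growth condition of `𝒜_j` on `∂^α f`, `α = (a, b)`,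
extended by `1` to the orders `|α| ≤ j`, for which `𝒜_j` prescribes no growth and the `C^j`-norm
takes over. The accompanying factor `[(|α|-j-1)!]^s` needs no extension: it is `1` for these orders
because of the truncated subtraction. -/
def growthWeight (H₁ H₂ : ℝ) (j a b : ℕ) : ℝ :=
  if a + b ≤ j then 1 else H₁ ^ ((a : ℤ) - j) * H₂ ^ b

theorem zpow_mul_pow_le_zpow_mul_pow (h₁ : 1 ≤ H₁) (h₁₂ : H₁ ≤ H₂) {m m' : ℤ} (hm : m ≤ m')
    (hb : b ≤ b') : H₁ ^ m * H₂ ^ b ≤ H₁ ^ m' * H₂ ^ b' := by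
  have h₂ : 1 ≤ H₂ := h₁.trans h₁₂
  gcongr

theorem one_le_zpow_mul_pow (h₁ : 1 ≤ H₁) (h₁₂ : H₁ ≤ H₂) {m : ℤ} (hm : 0 ≤ m + b) :
    1 ≤ H₁ ^ m * H₂ ^ b :=
  calc 1 ≤ H₁ ^ (m + b) := one_le_zpow₀ h₁ hm
    _ = H₁ ^ m * H₁ ^ b := by rw [zpow_add₀ (by positivity), zpow_natCast]
    _ ≤ H₁ ^ m * H₂ ^ b := by gcongr

theorem growthWeight_mul_le (h₁ : 1 ≤ H₁) (h₁₂ : H₁ ≤ H₂) (hij : j ≤ i)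
    (hj : j ≤ a + a' + (b + b')) :
    growthWeight H₁ H₂ i a b * growthWeight H₁ H₂ j a' b' ≤
      H₁ ^ (((a + a' : ℕ) : ℤ) - j) * H₂ ^ (b + b') := by
  have h_pos : H₁ ≠ 0 := by positivity
  unfold growthWeight
  split_ifs with hu hv hv
  · simpa using one_le_zpow_mul_pow h₁ h₁₂ (by omega)
  · rw [one_mul]
    exact zpow_mul_pow_le_zpow_mul_pow h₁ h₁₂ (by omega) (by omega)
  · rw [mul_one]
    exact zpow_mul_pow_le_zpow_mul_pow h₁ h₁₂ (by omega) (by omega)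
  · rw [mul_mul_mul_comm, ← zpow_add₀ h_pos, ← pow_add]
    exact zpow_mul_pow_le_zpow_mul_pow h₁ h₁₂ (by omega) le_rfl

theorem factorial_sub_rpow_le (hs : 0 ≤ s) (hij : j ≤ i) (n : ℕ) :
    ((n - i)! : ℝ) ^ s ≤ ((n - j)! : ℝ) ^ s := by
  gcongr

theorem one_le_factorial_rpow (hs : 0 ≤ s) (n : ℕ) : 1 ≤ (n ! : ℝ) ^ s :=
  Real.one_le_rpow (mod_cast Nat.factorial_pos n) hs

theorem mul_growth_le (hs : 0 ≤ s) (h₁ : 1 ≤ H₁) (h₁₂ : H₁ ≤ H₂) (hM₁ : 0 ≤ M₁) (hM₂ : 0 ≤ M₂)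
    (hij : j ≤ i) (hj : j ≤ a + a' + (b + b')) :
    M₁ * growthWeight H₁ H₂ i a b * ((a + b - (i + 1))! : ℝ) ^ s *
        (M₂ * growthWeight H₁ H₂ j a' b' * ((a' + b' - (j + 1))! : ℝ) ^ s) ≤
      M₁ * M₂ * (H₁ ^ (((a + a' : ℕ) : ℤ) - j) * H₂ ^ (b + b')) *
        (((a + b - (j + 1))! : ℝ) ^ s * ((a' + b' - (j + 1))! : ℝ) ^ s) :=
  calc _ = M₁ * M₂ * (growthWeight H₁ H₂ i a b * growthWeight H₁ H₂ j a' b') *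
        (((a + b - (i + 1))! : ℝ) ^ s * ((a' + b' - (j + 1))! : ℝ) ^ s) := by ring
    _ ≤ _ := by
      have h₂ : 1 ≤ H₂ := h₁.trans h₁₂
      gcongr M₁ * M₂ * ?_ * (?_ * _)
      · exact growthWeight_mul_le h₁ h₁₂ hij hj
      · exact factorial_sub_rpow_le hs (by omega) _

theorem abs_mpw_mul_le (hS : UniqueDiffOn ℝ S) (hs : 1 ≤ s) (h₁ : 1 ≤ H₁) (h₁₂ : H₁ ≤ H₂)
    (hj : 1 ≤ j) (hij : j ≤ i) (hab : j + 1 ≤ a + b)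
    (hu : ContDiffOn ℝ (a + b : ℕ) u S) (hv : ContDiffOn ℝ (a + b : ℕ) v S)
    {z : ℝ × ℝ} (hz : z ∈ S) (hM₁ : 0 ≤ M₁) (hM₂ : 0 ≤ M₂)
    (hu_le : ∀ k ≤ a, ∀ l ≤ b,
      |mpw S k l u z| ≤ M₁ * growthWeight H₁ H₂ i k l * ((k + l - (i + 1))! : ℝ) ^ s)
    (hv_le : ∀ k ≤ a, ∀ l ≤ b,
      |mpw S k l v z| ≤ M₂ * growthWeight H₁ H₂ j k l * ((k + l - (j + 1))! : ℝ) ^ s) :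
    |mpw S a b (fun y => u y * v y) z| ≤
      2 ^ (j + 2) * (j + 2) ^ (2 * (j + 1)) * (M₁ * M₂) * H₁ ^ ((a : ℤ) - j) * H₂ ^ b *
        ((a + b - (j + 1))! : ℝ) ^ s := by
  have h₂ : 1 ≤ H₂ := h₁.trans h₁₂
  set W := M₁ * M₂ * (H₁ ^ ((a : ℤ) - j) * H₂ ^ b) with hW
  have h_terms := abs_mpw_mul_le_sum_choose_mul hS hu hv le_rfl hz
    (g := fun m n => W * (((m - (j + 1))! : ℝ) ^ s * ((n - (j + 1))! : ℝ) ^ s))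
    fun k hk l hl => by
      obtain rfl := Finset.HasAntidiagonal.mem_antidiagonal.1 hk
      obtain rfl := Finset.HasAntidiagonal.mem_antidiagonal.1 hl
      have h_u := hu_le k.1 (by omega) l.1 (by omega)
      have h_v := hv_le k.2 (by omega) l.2 (by omega)
      rw [add_comm l.1, add_comm l.2]
      exact (mul_le_mul h_u h_v (abs_nonneg _) ((abs_nonneg _).trans h_u)).trans
        (mul_growth_le (by linarith) h₁ h₁₂ hM₁ hM₂ hij (by omega))
  refine h_terms.trans ?_
  simp only [mul_left_comm _ W, ← Finset.mul_sum]
  calc _ ≤ W * (2 ^ (j + 1 + 1) * ((j + 1 : ℕ) + 1) ^ (2 * (j + 1)) *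
        ((a + b - (j + 1))! : ℝ) ^ s) := by
        gcongr
        exact sum_choose_mul_factorial_sub_rpow_le hs (by omega) hab
    _ = _ := by
        rw [hW]
        push_cast
        ring

end Growth

section Strip

variable {p₀ μ s H₁ H₂ K : ℝ} {f : ℝ × ℝ → ℝ} {α₀ : ℕ × ℕ} {a b j k : ℕ} {z : ℝ × ℝ}

theorem uniqueDiffOn_strip (hp₀ : p₀ < 0) : UniqueDiffOn ℝ (Strip p₀) := by
  have h_prod : Strip p₀ = univ ×ˢ Icc p₀ 0 := by
    ext z
    simp [Strip]
  rw [h_prod]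
  exact uniqueDiffOn_univ.prod (uniqueDiffOn_Icc hp₀)

theorem supS_nonneg (p₀ : ℝ) (f : ℝ × ℝ → ℝ) : 0 ≤ supS p₀ f :=
  Real.sSup_nonneg <| by
    rintro _ ⟨z, _, rfl⟩
    exact abs_nonneg _

theorem supS_pd_le_cknorm (p₀ : ℝ) (f : ℝ × ℝ → ℝ) (hab : a + b ≤ k) :
    supS p₀ (pd p₀ a b f) ≤ cknorm p₀ k f :=
  calc supS p₀ (pd p₀ a b f)
      ≤ ∑ l ∈ Finset.range (k + 1 - a), supS p₀ (pd p₀ a l f) :=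
        Finset.single_le_sum (f := fun l => supS p₀ (pd p₀ a l f)) (fun _ _ => supS_nonneg _ _)
          (Finset.mem_range.2 (by omega))
    _ ≤ cknorm p₀ k f :=
        Finset.single_le_sum
          (f := fun m => ∑ l ∈ Finset.range (k + 1 - m), supS p₀ (pd p₀ m l f))
          (fun _ _ => Finset.sum_nonneg fun _ _ => supS_nonneg _ _)
          (Finset.mem_range.2 (by omega))

theorem MemCk.abs_pd_le_cknorm (hf : MemCk p₀ μ k f) (hab : a + b ≤ k) (hj : a + b ≤ j)
    (hz : z ∈ Strip p₀) : |pd p₀ a b f z| ≤ cknorm p₀ j f :=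
  (le_csSup (hf.2.1 a b hab) ⟨z, hz, rfl⟩).trans (supS_pd_le_cknorm p₀ f hj)

theorem memA.abs_pd_le (hf : memA p₀ μ s H₁ H₂ α₀ j f) (hs : 0 ≤ s) (h₁ : 0 ≤ H₁) (h₂ : 0 ≤ H₂)
    (hK : cknorm p₀ j f ≤ K) (ha : a ≤ α₀.1) (hb : b ≤ α₀.2) (hz : z ∈ Strip p₀) :
    |pd p₀ a b f z| ≤
      max K 1 * growthWeight H₁ H₂ j a b * ((a + b - (j + 1))! : ℝ) ^ s := by
  have h_fact := one_le_factorial_rpow hs (a + b - (j + 1))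
  unfold growthWeight
  split_ifs with h_low
  · rw [mul_one]
    calc |pd p₀ a b f z| ≤ max K 1 :=
          ((hf.1.abs_pd_le_cknorm (by omega) h_low hz).trans hK).trans (le_max_left _ _)
      _ ≤ max K 1 * ((a + b - (j + 1))! : ℝ) ^ s := le_mul_of_one_le_right (by positivity) h_fact
  · rw [mul_assoc]
    exact (hf.2 a b ha hb (by omega) z hz).trans
      (le_mul_of_one_le_left (by positivity) (le_max_right _ _))

theorem memA.contDiffOn (hf : memA p₀ μ s H₁ H₂ α₀ j f) (ha : a ≤ α₀.1) (hb : b ≤ α₀.2) :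
    ContDiffOn ℝ (a + b : ℕ) f (Strip p₀) :=
  hf.1.1.of_le (mod_cast Nat.add_le_add ha hb)

end Strip

theorem memA_three_two_mul_general (K L : ℝ) {i j : ℕ} (hj : 1 ≤ j) (hij : j ≤ i) :
    ∃ c : ℝ, 1 ≤ c ∧ ∀ (p₀ μ s : ℝ) (α₀ : ℕ × ℕ) (H₁ H₂ : ℝ) (u v : ℝ × ℝ → ℝ),
      p₀ < 0 → 1 ≤ s → 1 ≤ H₁ → H₁ ≤ H₂ →
      cknorm p₀ i u ≤ K → cknorm p₀ j v ≤ L →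
      memA p₀ μ s H₁ H₂ α₀ i u → memA p₀ μ s H₁ H₂ α₀ j v →
      ∀ a b : ℕ, a ≤ α₀.1 → b ≤ α₀.2 → j + 1 ≤ a + b → ∀ z ∈ Strip p₀,
        |pd p₀ a b (fun y => u y * v y) z| ≤
          c * H₁ ^ ((a : ℤ) - j) * H₂ ^ b * ((a + b - (j + 1))! : ℝ) ^ s := by
  refine ⟨2 ^ (j + 2) * (j + 2) ^ (2 * (j + 1)) * (max K 1 * max L 1), ?_, ?_⟩
  · have h_base : (1 : ℝ) ≤ j + 2 := by linarith [Nat.cast_nonneg (α := ℝ) j]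
    exact one_le_mul_of_one_le_of_one_le
      (one_le_mul_of_one_le_of_one_le (one_le_pow₀ one_le_two) (one_le_pow₀ h_base))
      (one_le_mul_of_one_le_of_one_le (le_max_right _ _) (le_max_right _ _))
  · intro p₀ μ s α₀ H₁ H₂ u v hp₀ hs h₁ h₁₂ hK hL hu hv a b ha hb hab z hz
    have hs₀ : 0 ≤ s := by linarith
    have h₁₀ : 0 ≤ H₁ := by linarith
    have h₂₀ : 0 ≤ H₂ := by linarith
    exact abs_mpw_mul_le (uniqueDiffOn_strip hp₀) hs h₁ h₁₂ hj hij hab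
      (hu.contDiffOn ha hb) (hv.contDiffOn ha hb) hz (by positivity) (by positivity)
      (fun k hk l hl => hu.abs_pd_le hs₀ h₁₀ h₂₀ hK (hk.trans ha) (hl.trans hb) hz)
      (fun k hk l hl => hv.abs_pd_le hs₀ h₁₀ h₂₀ hL (hk.trans ha) (hl.trans hb) hz)

/-- If `u ∈ 𝒜₃` and `v ∈ 𝒜₂` then `c̃_*⁻¹ uv ∈ 𝒜₂` for a constant `c̃_*` depending only
on the `C³`-norm of `u` and the `C²`-norm of `v` (and independent of `α₀, H₁, H₂`). -/
theorem memA_three_two_mul (p₀ μ s K : ℝ) (hp₀ : p₀ < 0) (hμ : μ ∈ Set.Ioo (0 : ℝ) 1)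
    (hs : 1 ≤ s) :
    ∃ c : ℝ, 1 ≤ c ∧ ∀ (α₀ : ℕ × ℕ) (H₁ H₂ : ℝ) (u v : ℝ × ℝ → ℝ),
      3 ≤ α₀.1 + α₀.2 → 1 ≤ H₁ → H₁ ≤ H₂ →
      cknorm p₀ 3 u ≤ K → cknorm p₀ 2 v ≤ K →
      memA p₀ μ s H₁ H₂ α₀ 3 u → memA p₀ μ s H₁ H₂ α₀ 2 v →
      ∀ a b : ℕ, a ≤ α₀.1 → b ≤ α₀.2 → 3 ≤ a + b → ∀ z ∈ Strip p₀,
        |pd p₀ a b (fun y => u y * v y) z| ≤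
          c * H₁ ^ ((a : ℤ) - 2) * H₂ ^ b * (Nat.factorial (a + b - 3) : ℝ) ^ s := by
  obtain ⟨c, hc, h⟩ := memA_three_two_mul_general K K one_le_two (Nat.le_succ 2)
  exact ⟨c, hc, fun α₀ H₁ H₂ u v _ => h p₀ μ s α₀ H₁ H₂ u v hp₀ hs⟩
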